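/- Let R be a commutative ring, 𝔗 a torsion theory over R, x₁,…,x_n a finite sequence of elements of R, and M an R-module. Then x₁,…,x_n is a weak M-regular sequence with respect to 𝔗 if and only if 𝔗-Kgrade_R((x₁,…,x_i)R, M) ≥ i for all i = 1,…,n. -/

import Mathlib

open CategoryTheory

universe u

noncomputable section

/-- A torsion theory over `R`: a class of `R`-modules closed under isomorphism, submodules,
quotient modules, extensions, and directed colimits (formulated as closure under directed
unions of submodules). -/
structure IsTorsionTheory (R : Type u) [CommRing R] (T : Set (ModuleCat.{u} R)) : Prop where
  mem_of_iso : ∀ {N N' : ModuleCat.{u} R}, (N ≅ N') → N ∈ T → N' ∈ T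
  submodule_mem : ∀ {N : ModuleCat.{u} R}, N ∈ T → ∀ S : Submodule R N,
    ModuleCat.of R S ∈ T
  quotient_mem : ∀ {N : ModuleCat.{u} R}, N ∈ T → ∀ S : Submodule R N,
    ModuleCat.of R (N ⧸ S) ∈ T
  ext_mem : ∀ {N : ModuleCat.{u} R} (S : Submodule R N),
    ModuleCat.of R S ∈ T → ModuleCat.of R (N ⧸ S) ∈ T → N ∈ T
  directed_mem : ∀ {N : ModuleCat.{u} R} {ι : Type u} [Nonempty ι] (S : ι → Submodule R N),
    Directed (· ≤ ·) S → (∀ i, ModuleCat.of R (S i) ∈ T) → iSup S = ⊤ → N ∈ T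

variable {R : Type u} [CommRing R]

/-- The "outgoing" differential of the Koszul cocomplex `Hom_R(K_•(x), M)`, whose degree `i`
component is indexed by the `i`-element subsets of `{1, …, r}`. -/
def koszulDiff {r : ℕ} (x : Fin r → R) (M : Type u) [AddCommGroup M] [Module R M] (i : ℕ) :
    ({s : Finset (Fin r) // s.card = i} → M) →ₗ[R]
      ({s : Finset (Fin r) // s.card = i + 1} → M) where
  toFun φ t := ∑ j ∈ t.1.attach,
    ((-1 : R) ^ (t.1.filter (fun k => k < j.1)).card * x j.1) •
      φ ⟨t.1.erase j.1, by simp [Finset.card_erase_of_mem j.2, t.2]⟩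
  map_add' φ ψ := by
    funext t
    simp [Finset.sum_add_distrib, smul_add]
  map_smul' c φ := by
    funext t
    simp [Finset.smul_sum, smul_comm c]

/-- The "incoming" differential of the Koszul cocomplex in degree `i`
(its source is trivial when `i = 0`). -/
def koszulDiffIn {r : ℕ} (x : Fin r → R) (M : Type u) [AddCommGroup M] [Module R M] (i : ℕ) :
    ({s : Finset (Fin r) // s.card + 1 = i} → M) →ₗ[R]
      ({s : Finset (Fin r) // s.card = i} → M) where
  toFun φ t := ∑ j ∈ t.1.attach,
    ((-1 : R) ^ (t.1.filter (fun k => k < j.1)).card * x j.1) •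
      φ ⟨t.1.erase j.1, by rw [Finset.card_erase_add_one j.2]; exact t.2⟩
  map_add' φ ψ := by
    funext t
    simp [Finset.sum_add_distrib, smul_add]
  map_smul' c φ := by
    funext t
    simp [Finset.smul_sum, smul_comm c]

/-- The `i`-th Koszul cohomology `H^i(x; M)` of `M` with respect to `x₁, …, x_r`, i.e. the
`i`-th cohomology of the cocomplex `Hom_R(K_•(x), M)`. -/
abbrev koszulCohomology {r : ℕ} (x : Fin r → R) (M : Type u) [AddCommGroup M] [Module R M]
    (i : ℕ) : Type u :=
  ↥(LinearMap.ker (koszulDiff x M i)) ⧸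
    (Submodule.comap (LinearMap.ker (koszulDiff x M i)).subtype
      (LinearMap.range (koszulDiffIn x M i)))

/-- The `𝔗`-Koszul grade of the ideal `(x₁, …, x_r)` on `M`: the infimum of the set of `i`
such that `H^i(x; M) ∉ 𝔗` (with `inf ∅ = +∞`). -/
def TKgrade (T : Set (ModuleCat.{u} R)) {r : ℕ} (x : Fin r → R) (M : Type u)
    [AddCommGroup M] [Module R M] : ℕ∞ :=
  sInf ((↑· : ℕ → ℕ∞) '' {i | ModuleCat.of R (koszulCohomology x M i) ∉ T})

/-- `x₁, …, x_n` is a weak `M`-regular sequence with respect to `𝔗` if the module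
`((x₁,…,x_{i-1})M :_M x_i) / (x₁,…,x_{i-1})M` belongs to `𝔗` for all `i = 1, …, n`. -/
def IsWeakRegularSeqWrt (T : Set (ModuleCat.{u} R)) {n : ℕ} (x : Fin n → R) (M : Type u)
    [AddCommGroup M] [Module R M] : Prop :=
  ∀ i : Fin n,
    ModuleCat.of R
      ↥(Submodule.map (Ideal.span (x '' {j | j < i}) • (⊤ : Submodule R M)).mkQ
        (Submodule.comap (LinearMap.lsmul R M (x i))
          (Ideal.span (x '' {j | j < i}) • (⊤ : Submodule R M)))) ∈ T

namespace IsTorsionTheory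

section Modules

variable {T : Set (ModuleCat.{u} R)}
  {X Y : Type u} [AddCommGroup X] [Module R X] [AddCommGroup Y] [Module R Y]

theorem of_linearEquiv (hT : IsTorsionTheory R T) (e : X ≃ₗ[R] Y)
    (hX : ModuleCat.of R X ∈ T) : ModuleCat.of R Y ∈ T :=
  hT.mem_of_iso e.toModuleIso hX

theorem of_surjective (hT : IsTorsionTheory R T) (f : X →ₗ[R] Y) (hf : Function.Surjective f)
    (hX : ModuleCat.of R X ∈ T) : ModuleCat.of R Y ∈ T :=
  hT.of_linearEquiv (f.quotKerEquivOfSurjective hf)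
    (hT.quotient_mem (N := ModuleCat.of R X) hX (LinearMap.ker f))

theorem of_ker (hT : IsTorsionTheory R T) (f : X →ₗ[R] Y)
    (hker : ModuleCat.of R (LinearMap.ker f) ∈ T) (hY : ModuleCat.of R Y ∈ T) :
    ModuleCat.of R X ∈ T :=
  hT.ext_mem (N := ModuleCat.of R X) (LinearMap.ker f) hker
    (hT.of_linearEquiv f.quotKerEquivRange.symm
      (hT.submodule_mem (N := ModuleCat.of R Y) hY (LinearMap.range f)))

end Modules

end IsTorsionTheory

/-- The subquotient `A / (A ⊓ B)` of a module belongs to the class `T`. -/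
def SubquotientMem (T : Set (ModuleCat.{u} R)) {E : Type u} [AddCommGroup E] [Module R E]
    (A B : Submodule R E) : Prop :=
  ModuleCat.of R (A ⧸ B.comap A.subtype) ∈ T

namespace SubquotientMem

variable {T : Set (ModuleCat.{u} R)}
  {E F : Type u} [AddCommGroup E] [Module R E] [AddCommGroup F] [Module R F]
  {A B : Submodule R E} {A' B' : Submodule R F}

theorem iff_map_mkQ (hT : IsTorsionTheory R T) :
    SubquotientMem T A B ↔ ModuleCat.of R (A.map B.mkQ) ∈ T := by
  have hker : LinearMap.ker (B.mkQ.submoduleMap A) = B.comap A.subtype := by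
    ext a
    rw [LinearMap.mem_ker, Subtype.ext_iff]
    simp
  have e := (Submodule.quotEquivOfEq _ _ hker.symm).trans
    ((B.mkQ.submoduleMap A).quotKerEquivOfSurjective (B.mkQ.submoduleMap_surjective A))
  exact ⟨hT.of_linearEquiv e, hT.of_linearEquiv e.symm⟩

theorem of_le (hT : IsTorsionTheory R T) (hne : T.Nonempty) (h : A ≤ B) :
    SubquotientMem T A B := by
  obtain ⟨N, hN⟩ := hne
  have : Subsingleton (A ⧸ B.comap A.subtype) :=
    Submodule.Quotient.subsingleton_iff.2 (by
      rw [eq_top_iff]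
      exact fun a _ => h a.2)
  exact hT.of_surjective (0 : N →ₗ[R] _) (fun y => ⟨0, Subsingleton.elim _ _⟩) hN

theorem nonempty (h : SubquotientMem T A B) : T.Nonempty := ⟨_, h⟩

/-- Membership in a torsion theory passes along a surjection of subquotients. -/
theorem of_surjective (hT : IsTorsionTheory R T) (f : E →ₗ[R] F) (hA : ∀ a ∈ A, f a ∈ A')
    (hB : ∀ a ∈ A, a ∈ B → f a ∈ B') (hsurj : ∀ y ∈ A', ∃ a ∈ A, y - f a ∈ B')
    (h : SubquotientMem T A B) : SubquotientMem T A' B' := by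
  refine hT.of_surjective
    (Submodule.mapQ (B.comap A.subtype) (B'.comap A'.subtype) (f.restrict hA)
      fun a ha => hB a a.2 ha) ?_ h
  intro y
  obtain ⟨⟨y, hy⟩, rfl⟩ := Submodule.Quotient.mk_surjective _ y
  obtain ⟨a, ha, hya⟩ := hsurj y hy
  refine ⟨Submodule.Quotient.mk ⟨a, ha⟩, ?_⟩
  exact ((Submodule.Quotient.eq (B'.comap A'.subtype) (x := ⟨y, hy⟩)
    (y := f.restrict hA ⟨a, ha⟩)).2 hya).symm

/-- If the kernel and the target of the map of subquotients induced by `f : E → F` lie in a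
torsion theory, then so does its source. -/
theorem of_ker (hT : IsTorsionTheory R T) (f : E →ₗ[R] F) (hA : ∀ a ∈ A, f a ∈ A')
    (hB : ∀ a ∈ A, a ∈ B → f a ∈ B') (hker : SubquotientMem T (A ⊓ B'.comap f) B)
    (h : SubquotientMem T A' B') : SubquotientMem T A B := by
  let g := Submodule.mapQ (B.comap A.subtype) (B'.comap A'.subtype) (f.restrict hA)
      fun a ha => hB a a.2 ha
  refine hT.of_ker g ?_ h
  let i : ↥(A ⊓ B'.comap f) →ₗ[R] A := Submodule.inclusion inf_le_left
  let k : ↥(A ⊓ B'.comap f) →ₗ[R] LinearMap.ker g :=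
    ((B.comap A.subtype).mkQ ∘ₗ i).codRestrict (LinearMap.ker g) fun a => by
      rw [LinearMap.mem_ker]
      exact (Submodule.Quotient.mk_eq_zero _).2 a.2.2
  refine hT.of_surjective
    ((B.comap (A ⊓ B'.comap f).subtype).liftQ k fun a ha => ?_) ?_ hker
  · rw [LinearMap.mem_ker, Subtype.ext_iff]
    exact (Submodule.Quotient.mk_eq_zero _).2 ha
  · rintro ⟨y, hy⟩
    obtain ⟨y, rfl⟩ := Submodule.Quotient.mk_surjective _ y
    have hy' : f y ∈ B' := 
      (Submodule.Quotient.mk_eq_zero (B'.comap A'.subtype) (x := f.restrict hA y)).1 hy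
    exact ⟨Submodule.Quotient.mk ⟨y, y.2, hy'⟩, Subtype.ext rfl⟩

end SubquotientMem

section Total

variable {r : ℕ} (M : Type u) [AddCommGroup M] [Module R M]

/-- The total differential of the Koszul cocomplex, on functions on all finite subsets. -/
def koszulTotalDiff (x : Fin r → R) :
    (Finset (Fin r) → M) →ₗ[R] (Finset (Fin r) → M) where
  toFun φ t := ∑ j ∈ t, ((-1 : R) ^ (t.filter (fun k => k < j)).card * x j) • φ (t.erase j)
  map_add' φ ψ := by
    funext t
    simp [Finset.sum_add_distrib, smul_add]
  map_smul' c φ := by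
    funext t
    simp [Finset.smul_sum, smul_comm c]

variable (R r) in
/-- The functions on finite subsets supported on the subsets whose cardinality satisfies `p`. -/
def supportedOnCard (p : ℕ → Prop) : Submodule R (Finset (Fin r) → M) where
  carrier := {φ | ∀ s, ¬ p s.card → φ s = 0}
  zero_mem' _ _ := rfl
  add_mem' ha hb s hs := by simp [ha s hs, hb s hs]
  smul_mem' c a ha s hs := by simp [ha s hs]

/-- The degree `i` cocycles of the Koszul cocomplex. -/
def koszulCocycles (x : Fin r → R) (i : ℕ) : Submodule R (Finset (Fin r) → M) :=
  supportedOnCard R r M (· = i) ⊓ LinearMap.ker (koszulTotalDiff M x)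

/-- The degree `i` coboundaries of the Koszul cocomplex. -/
def koszulCoboundaries (x : Fin r → R) (i : ℕ) : Submodule R (Finset (Fin r) → M) :=
  (supportedOnCard R r M (· + 1 = i)).map (koszulTotalDiff M x)

variable {M}

theorem koszulTotalDiff_apply (x : Fin r → R) (φ : Finset (Fin r) → M) (t : Finset (Fin r)) :
    koszulTotalDiff M x φ t =
      ∑ j ∈ t, ((-1 : R) ^ (t.filter (fun k => k < j)).card * x j) • φ (t.erase j) := rfl

theorem koszulTotalDiff_mem_supportedOnCard (x : Fin r → R) {i : ℕ} {φ : Finset (Fin r) → M}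
    (hφ : φ ∈ supportedOnCard R r M (· + 1 = i)) :
    koszulTotalDiff M x φ ∈ supportedOnCard R r M (· = i) := by
  intro t ht
  refine Finset.sum_eq_zero fun j hj => ?_
  rw [hφ _ (by simpa only [Finset.card_erase_add_one hj] using ht), smul_zero]

variable (R r M) in
/-- Extension by zero of functions on the subsets whose cardinality satisfies `p`. -/
def extendByZero (p : ℕ → Prop) :
    ({s : Finset (Fin r) // p s.card} → M) →ₗ[R] (Finset (Fin r) → M) :=
  open Classical in
  { toFun := fun φ s => if h : p s.card then φ ⟨s, h⟩ else 0
    map_add' := fun φ ψ => by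
      funext s
      by_cases h : p s.card <;> simp [h]
    map_smul' := fun c φ => by
      funext s
      by_cases h : p s.card <;> simp [h] }

theorem extendByZero_of_pos {p : ℕ → Prop} (φ : {s : Finset (Fin r) // p s.card} → M)
    {s : Finset (Fin r)} (h : p s.card) : extendByZero R r M p φ s = φ ⟨s, h⟩ :=
  dif_pos h

theorem extendByZero_mem {p : ℕ → Prop} (φ : {s : Finset (Fin r) // p s.card} → M) :
    extendByZero R r M p φ ∈ supportedOnCard R r M p :=
  fun _ hs => dif_neg hs

theorem extendByZero_restrict {p : ℕ → Prop} {φ : Finset (Fin r) → M}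
    (hφ : φ ∈ supportedOnCard R r M p) :
    extendByZero R r M p (fun s => φ s.1) = φ := by
  funext s
  by_cases h : p s.card
  · exact extendByZero_of_pos _ h
  · rw [hφ s h]
    exact extendByZero_mem _ s h

theorem koszulDiff_apply_eq (x : Fin r → R) (i : ℕ)
    (φ : {s : Finset (Fin r) // s.card = i} → M) (t : {s : Finset (Fin r) // s.card = i + 1}) :
    koszulDiff x M i φ t = koszulTotalDiff M x (extendByZero R r M (· = i) φ) t := by
  rw [koszulTotalDiff_apply, ← Finset.sum_attach]
  refine Finset.sum_congr rfl fun j _ => ?_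
  rw [extendByZero_of_pos (p := (· = i))]

theorem koszulDiffIn_apply_eq (x : Fin r → R) (i : ℕ)
    (φ : {s : Finset (Fin r) // s.card + 1 = i} → M) (t : {s : Finset (Fin r) // s.card = i}) :
    koszulDiffIn x M i φ t = koszulTotalDiff M x (extendByZero R r M (· + 1 = i) φ) t := by
  rw [koszulTotalDiff_apply, ← Finset.sum_attach]
  refine Finset.sum_congr rfl fun j _ => ?_
  rw [extendByZero_of_pos (p := (· + 1 = i))]

theorem mem_ker_koszulDiff_iff (x : Fin r → R) (i : ℕ)
    (φ : {s : Finset (Fin r) // s.card = i} → M) :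
    φ ∈ LinearMap.ker (koszulDiff x M i) ↔
      extendByZero R r M (· = i) φ ∈ koszulCocycles M x i := by
  refine ⟨fun h => ⟨extendByZero_mem _, ?_⟩, fun h => ?_⟩
  · refine LinearMap.mem_ker.2 ?_
    funext t
    by_cases ht : t.card = i + 1
    · rw [← koszulDiff_apply_eq x i φ ⟨t, ht⟩, LinearMap.mem_ker.1 h]
      rfl
    · refine koszulTotalDiff_mem_supportedOnCard (i := i + 1) x (fun s hs => ?_) t ht
      exact extendByZero_mem (p := (· = i)) φ s fun h => hs (by rw [h])
  · rw [LinearMap.mem_ker]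
    funext t
    rw [koszulDiff_apply_eq, LinearMap.mem_ker.1 h.2]
    rfl

theorem mem_range_koszulDiffIn_iff (x : Fin r → R) (i : ℕ)
    (φ : {s : Finset (Fin r) // s.card = i} → M) :
    φ ∈ LinearMap.range (koszulDiffIn x M i) ↔
      extendByZero R r M (· = i) φ ∈ koszulCoboundaries M x i := by
  constructor
  · rintro ⟨ψ, rfl⟩
    refine ⟨_, extendByZero_mem ψ, ?_⟩
    rw [← extendByZero_restrict (koszulTotalDiff_mem_supportedOnCard x (extendByZero_mem ψ))]
    congr 1
    funext t
    rw [koszulDiffIn_apply_eq]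
  · rintro ⟨ψ, hψ, h⟩
    refine ⟨fun s => ψ s.1, ?_⟩
    funext t
    rw [koszulDiffIn_apply_eq, extendByZero_restrict hψ, h, extendByZero_of_pos (p := (· = i))]

theorem koszulCohomology_mem_iff {T : Set (ModuleCat.{u} R)} (hT : IsTorsionTheory R T)
    (x : Fin r → R) (i : ℕ) :
    ModuleCat.of R (koszulCohomology x M i) ∈ T ↔
      SubquotientMem T (koszulCocycles M x i) (koszulCoboundaries M x i) := by
  constructor
  · intro h
    have h : SubquotientMem T (LinearMap.ker (koszulDiff x M i))
      (LinearMap.range (koszulDiffIn x M i)) := h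
    refine h.of_surjective hT (extendByZero R r M (· = i))
      (fun a => (mem_ker_koszulDiff_iff x i a).1)
      (fun a _ => (mem_range_koszulDiffIn_iff x i a).1) fun y hy => ⟨fun s => y s.1, ?_, ?_⟩
    · rwa [mem_ker_koszulDiff_iff, extendByZero_restrict hy.1]
    · rw [extendByZero_restrict hy.1, sub_self]
      exact zero_mem _
  · intro h
    refine h.of_surjective hT (LinearMap.funLeft R M Subtype.val) (A' := LinearMap.ker _)
      (B' := LinearMap.range _) (fun a ha => ?_) (fun a ha hb => ?_)
      fun y hy => ⟨_, (mem_ker_koszulDiff_iff x i y).1 hy, ?_⟩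
    · rw [mem_ker_koszulDiff_iff]
      exact (extendByZero_restrict ha.1).symm ▸ ha
    · rw [mem_range_koszulDiffIn_iff]
      exact (extendByZero_restrict ha.1).symm ▸ hb
    · have hy' : LinearMap.funLeft R M Subtype.val (extendByZero R r M (· = i) y) = y :=
        funext fun s => extendByZero_of_pos (R := R) (p := (· = i)) y s.2
      rw [hy', sub_self]
      exact zero_mem _

end Total

section Split

variable {r : ℕ} {M : Type u} [AddCommGroup M] [Module R M]

/-- A subset of `{0, …, r - 1}` as a subset of `{0, …, r}`. -/
def liftSucc (s : Finset (Fin r)) : Finset (Fin (r + 1)) := s.map Fin.castSuccEmb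

/-- The subset of `{0, …, r}` obtained by adding `r` to a subset of `{0, …, r - 1}`. -/
def insertLast (s : Finset (Fin r)) : Finset (Fin (r + 1)) :=
  insert (Fin.last r) (liftSucc s)

theorem last_notMem_liftSucc (s : Finset (Fin r)) : Fin.last r ∉ liftSucc s := by
  simp [liftSucc, Fin.castSucc_ne_last]

theorem card_liftSucc (s : Finset (Fin r)) : (liftSucc s).card = s.card := by
  simp [liftSucc]

theorem card_insertLast (s : Finset (Fin r)) : (insertLast s).card = s.card + 1 := by
  rw [insertLast, Finset.card_insert_of_notMem (last_notMem_liftSucc s), card_liftSucc]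

/-- The subset of `{0, …, r - 1}` underlying a subset of `{0, …, r}`. -/
def dropLast (s : Finset (Fin (r + 1))) : Finset (Fin r) :=
  Finset.univ.filter fun j => j.castSucc ∈ s

theorem dropLast_liftSucc (s : Finset (Fin r)) : dropLast (liftSucc s) = s := by
  ext j
  simp [dropLast, liftSucc]

theorem dropLast_insertLast (s : Finset (Fin r)) : dropLast (insertLast s) = s := by
  ext j
  simp [dropLast, insertLast, liftSucc, Fin.castSucc_ne_last]

theorem liftSucc_dropLast {s : Finset (Fin (r + 1))} (h : Fin.last r ∉ s) :
    liftSucc (dropLast s) = s := by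
  ext j
  induction j using Fin.lastCases with
  | last => simp [h, last_notMem_liftSucc]
  | cast j => simp [dropLast, liftSucc]

theorem insertLast_dropLast {s : Finset (Fin (r + 1))} (h : Fin.last r ∈ s) :
    insertLast (dropLast s) = s := by
  ext j
  induction j using Fin.lastCases with
  | last => simp [h, insertLast]
  | cast j => simp [dropLast, insertLast, liftSucc, Fin.castSucc_ne_last]

theorem liftSucc_erase (s : Finset (Fin r)) (j : Fin r) :
    (liftSucc s).erase j.castSucc = liftSucc (s.erase j) := by
  simp [liftSucc, Finset.map_erase]

theorem insertLast_erase (s : Finset (Fin r)) (j : Fin r) :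
    (insertLast s).erase j.castSucc = insertLast (s.erase j) := by
  rw [insertLast, Finset.erase_insert_of_ne (Fin.castSucc_ne_last j).symm, liftSucc_erase,
    insertLast]

theorem card_filter_liftSucc (s : Finset (Fin r)) (j : Fin r) :
    ((liftSucc s).filter (fun k => k < j.castSucc)).card = (s.filter (fun k => k < j)).card := by
  rw [liftSucc, Finset.filter_map, Finset.card_map]
  rfl

theorem card_filter_insertLast (s : Finset (Fin r)) (j : Fin r) :
    ((insertLast s).filter (fun k => k < j.castSucc)).card =
      (s.filter (fun k => k < j)).card := by
  rw [insertLast, Finset.filter_insert, if_neg (by simp [Fin.le_last]), card_filter_liftSucc]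

theorem card_filter_insertLast_last (s : Finset (Fin r)) :
    ((insertLast s).filter (fun k => k < Fin.last r)).card = s.card := by
  rw [insertLast, Finset.filter_insert, if_neg (lt_irrefl _), Finset.filter_true_of_mem,
    card_liftSucc]
  intro k hk
  simp only [liftSucc, Finset.mem_map] at hk
  obtain ⟨j, -, rfl⟩ := hk
  exact Fin.castSucc_lt_last j

variable (R r M) in
/-- Restriction of a function to the subsets not containing the last element. -/
def resLift : (Finset (Fin (r + 1)) → M) →ₗ[R] (Finset (Fin r) → M) :=
  LinearMap.funLeft R M liftSucc

variable (R r M) in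
/-- Restriction of a function to the subsets containing the last element. -/
def resInsert : (Finset (Fin (r + 1)) → M) →ₗ[R] (Finset (Fin r) → M) :=
  LinearMap.funLeft R M insertLast

variable (R r M) in
/-- The function with prescribed restrictions to the subsets that do not, resp. do, contain the
last element. -/
def glue : (Finset (Fin r) → M) × (Finset (Fin r) → M) →ₗ[R] (Finset (Fin (r + 1)) → M) where
  toFun p s := if Fin.last r ∈ s then p.2 (dropLast s) else p.1 (dropLast s)
  map_add' p q := by
    funext s
    by_cases h : Fin.last r ∈ s <;> simp [h]
  map_smul' c p := by
    funext s
    by_cases h : Fin.last r ∈ s <;> simp [h]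

theorem resLift_glue (a b : Finset (Fin r) → M) :
    resLift R r M (glue R r M (a, b)) = a := by
  funext s
  simp [resLift, glue, last_notMem_liftSucc, LinearMap.funLeft_apply, dropLast_liftSucc]

theorem resInsert_glue (a b : Finset (Fin r) → M) :
    resInsert R r M (glue R r M (a, b)) = b := by
  funext s
  have h : Fin.last r ∈ insertLast s := Finset.mem_insert_self _ _
  simp [resInsert, glue, h, LinearMap.funLeft_apply, dropLast_insertLast]

theorem ext_res {φ ψ : Finset (Fin (r + 1)) → M} (h₁ : resLift R r M φ = resLift R r M ψ)
    (h₂ : resInsert R r M φ = resInsert R r M ψ) : φ = ψ := by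
  funext s
  by_cases h : Fin.last r ∈ s
  · rw [← insertLast_dropLast h]
    exact congrFun h₂ _
  · rw [← liftSucc_dropLast h]
    exact congrFun h₁ _

theorem mem_supportedOnCard_iff_res {p : ℕ → Prop} {φ : Finset (Fin (r + 1)) → M} :
    φ ∈ supportedOnCard R (r + 1) M p ↔
      resLift R r M φ ∈ supportedOnCard R r M p ∧
        resInsert R r M φ ∈ supportedOnCard R r M (fun i => p (i + 1)) := by
  constructor
  · refine fun h => ⟨fun s hs => h _ ?_, fun s hs => h _ ?_⟩
    · rwa [card_liftSucc]
    · rwa [card_insertLast]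
  · rintro ⟨h₁, h₂⟩ s hs
    by_cases h : Fin.last r ∈ s
    · rw [← insertLast_dropLast h] at hs ⊢
      exact h₂ _ (by rwa [card_insertLast] at hs)
    · rw [← liftSucc_dropLast h] at hs ⊢
      exact h₁ _ (by rwa [card_liftSucc] at hs)

theorem supportedOnCard_succ (k : ℕ) :
    supportedOnCard R r M (· + 1 = k + 1) = supportedOnCard R r M (· = k) := by
  simp only [Nat.add_right_cancel_iff]

theorem eq_zero_of_mem_supportedOnCard {φ : Finset (Fin r) → M}
    (h : φ ∈ supportedOnCard R r M (· + 1 = 0)) : φ = 0 :=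
  funext fun s => h s (Nat.succ_ne_zero _)

variable (x : Fin (r + 1) → R)

theorem resLift_koszulTotalDiff (φ : Finset (Fin (r + 1)) → M) :
    resLift R r M (koszulTotalDiff M x φ) =
      koszulTotalDiff M (fun j => x j.castSucc) (resLift R r M φ) := by
  funext t
  change koszulTotalDiff M x φ (liftSucc t) = _
  rw [koszulTotalDiff_apply, koszulTotalDiff_apply, liftSucc, Finset.sum_map]
  refine Finset.sum_congr rfl fun j _ => ?_
  change ((-1 : R) ^ ((liftSucc t).filter (fun k => k < j.castSucc)).card * x j.castSucc) •
    φ ((liftSucc t).erase j.castSucc) = _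
  rw [card_filter_liftSucc, liftSucc_erase]
  rfl

theorem resInsert_koszulTotalDiff {i : ℕ} {φ : Finset (Fin (r + 1)) → M}
    (hφ : φ ∈ supportedOnCard R (r + 1) M (· = i)) :
    resInsert R r M (koszulTotalDiff M x φ) =
      koszulTotalDiff M (fun j => x j.castSucc) (resInsert R r M φ) +
        ((-1 : R) ^ i * x (Fin.last r)) • resLift R r M φ := by
  funext t
  have hi : (-1 : R) ^ t.card • φ (liftSucc t) = (-1 : R) ^ i • φ (liftSucc t) := by
    by_cases h : t.card = i
    · rw [h]
    · rw [hφ (liftSucc t) (by rwa [card_liftSucc]), smul_zero, smul_zero]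
  have herase : (insertLast t).erase (Fin.last r) = liftSucc t :=
    Finset.erase_insert (last_notMem_liftSucc t)
  change koszulTotalDiff M x φ (insertLast t) = koszulTotalDiff M _ _ t +
    ((-1 : R) ^ i * x (Fin.last r)) • φ (liftSucc t)
  rw [koszulTotalDiff_apply, koszulTotalDiff_apply]
  conv_lhs => rw [insertLast, Finset.sum_insert (last_notMem_liftSucc t), add_comm]
  congr 1
  · conv_lhs => rw [liftSucc, Finset.sum_map]
    refine Finset.sum_congr rfl fun j _ => ?_
    change ((-1 : R) ^ ((insertLast t).filter (fun k => k < j.castSucc)).card * x j.castSucc) •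
      φ ((insertLast t).erase j.castSucc) = _
    rw [card_filter_insertLast, insertLast_erase]
    rfl
  · change ((-1 : R) ^ ((insertLast t).filter (fun k => k < Fin.last r)).card * x (Fin.last r)) •
      φ ((insertLast t).erase (Fin.last r)) = _
    rw [card_filter_insertLast_last, herase, mul_comm, mul_smul, hi, ← mul_smul, mul_comm]

theorem mem_koszulCocycles_iff_res {i : ℕ} {φ : Finset (Fin (r + 1)) → M} :
    φ ∈ koszulCocycles M x i ↔
      resLift R r M φ ∈ koszulCocycles M (fun j => x j.castSucc) i ∧
      resInsert R r M φ ∈ supportedOnCard R r M (· + 1 = i) ∧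
      koszulTotalDiff M (fun j => x j.castSucc) (resInsert R r M φ) +
        ((-1 : R) ^ i * x (Fin.last r)) • resLift R r M φ = 0 := by
  constructor
  · rintro ⟨hs, hd⟩
    have hd := LinearMap.mem_ker.1 hd
    obtain ⟨h₁, h₂⟩ := mem_supportedOnCard_iff_res.1 hs
    refine ⟨⟨h₁, LinearMap.mem_ker.2 ?_⟩, h₂, ?_⟩
    · rw [← resLift_koszulTotalDiff, hd, map_zero]
    · rw [← resInsert_koszulTotalDiff x hs, hd, map_zero]
  · rintro ⟨⟨h₁, h₂⟩, h₃, h₄⟩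
    have hs := mem_supportedOnCard_iff_res.2 ⟨h₁, h₃⟩
    refine ⟨hs, LinearMap.mem_ker.2 (ext_res (R := R) ?_ ?_)⟩
    · rw [resLift_koszulTotalDiff, map_zero]
      exact LinearMap.mem_ker.1 h₂
    · rw [resInsert_koszulTotalDiff x hs, map_zero, h₄]

theorem resLift_mem_koszulCoboundaries {i : ℕ} {φ : Finset (Fin (r + 1)) → M}
    (hφ : φ ∈ koszulCoboundaries M x i) :
    resLift R r M φ ∈ koszulCoboundaries M (fun j => x j.castSucc) i := by
  obtain ⟨c, hc, rfl⟩ := hφ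
  exact ⟨_, (mem_supportedOnCard_iff_res.1 hc).1, (resLift_koszulTotalDiff x c).symm⟩

/-- `b ↦ (0, b)` maps coboundaries to coboundaries. -/
theorem glue_zero_mem_koszulCoboundaries {k : ℕ} {b : Finset (Fin r) → M}
    (hb : b ∈ koszulCoboundaries M (fun j => x j.castSucc) k) :
    glue R r M (0, b) ∈ koszulCoboundaries M x (k + 1) := by
  obtain ⟨c, hc, rfl⟩ := hb
  have hc' : glue R r M (0, c) ∈ supportedOnCard R (r + 1) M (· = k) := by
    rw [mem_supportedOnCard_iff_res, resLift_glue, resInsert_glue]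
    exact ⟨zero_mem _, hc⟩
  refine ⟨glue R r M (0, c), by rwa [supportedOnCard_succ], ext_res (R := R) ?_ ?_⟩
  · rw [resLift_koszulTotalDiff, resLift_glue, resLift_glue, map_zero]
  · rw [resInsert_koszulTotalDiff x hc', resLift_glue, resInsert_glue, resInsert_glue, smul_zero,
      add_zero]

/-- The kernel of `H^i(x₁, …, x_{r+1}; M) → H^i(x₁, …, x_r; M)` lies in a torsion theory when
`H^{i-1}(x₁, …, x_r; M)` does. -/
theorem subquotientMem_ker_resLift {T : Set (ModuleCat.{u} R)} (hT : IsTorsionTheory R T)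
    (hne : T.Nonempty) (i : ℕ)
    (h : ∀ k, k + 1 = i → SubquotientMem T (koszulCocycles M (fun j => x j.castSucc) k)
      (koszulCoboundaries M (fun j => x j.castSucc) k)) :
    SubquotientMem T (koszulCocycles M x i ⊓
      (koszulCoboundaries M (fun j => x j.castSucc) i).comap (resLift R r M))
      (koszulCoboundaries M x i) := by
  cases i with
  | zero =>
    refine SubquotientMem.of_le hT hne ?_
    rintro φ ⟨hφ, c, hc, hcφ⟩
    have h₁ : resLift R r M φ = 0 := by
      rw [← hcφ, eq_zero_of_mem_supportedOnCard hc, map_zero]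
    have h₂ : resInsert R r M φ = 0 :=
      eq_zero_of_mem_supportedOnCard ((mem_koszulCocycles_iff_res x).1 hφ).2.1
    have : φ = 0 := ext_res (R := R) (by rw [h₁, map_zero]) (by rw [h₂, map_zero])
    rw [this]
    exact zero_mem _
  | succ k =>
    have hglue : ∀ b ∈ koszulCocycles M (fun j => x j.castSucc) k,
        glue R r M (0, b) ∈ koszulCocycles M x (k + 1) := by
      intro b hb
      rw [mem_koszulCocycles_iff_res, resLift_glue, resInsert_glue, supportedOnCard_succ]
      refine ⟨zero_mem _, hb.1, ?_⟩
      rw [LinearMap.mem_ker.1 hb.2, smul_zero, add_zero]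
    refine (h k rfl).of_surjective hT (glue R r M ∘ₗ LinearMap.inr R _ _) (fun b hb => ?_)
      (fun b _ hb => glue_zero_mem_koszulCoboundaries x hb) ?_
    · refine ⟨hglue b hb, ?_⟩
      change resLift R r M (glue R r M (0, b)) ∈
        koszulCoboundaries M (fun j => x j.castSucc) (k + 1)
      rw [resLift_glue]
      exact zero_mem _
    · rintro φ ⟨hφ, c, hc, hcφ⟩
      obtain ⟨-, hb, hd⟩ := (mem_koszulCocycles_iff_res x).1 hφ
      rw [SetLike.mem_coe, supportedOnCard_succ] at hc
      rw [supportedOnCard_succ] at hb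
      have hc' : glue R r M (c, 0) ∈ supportedOnCard R (r + 1) M (· = k) := by
        rw [mem_supportedOnCard_iff_res, resLift_glue, resInsert_glue]
        exact ⟨hc, zero_mem _⟩
      refine ⟨resInsert R r M φ - ((-1 : R) ^ k * x (Fin.last r)) • c,
        ⟨sub_mem hb (Submodule.smul_mem _ _ hc), LinearMap.mem_ker.2 ?_⟩,
        glue R r M (c, 0), by rwa [supportedOnCard_succ], ext_res (R := R) ?_ ?_⟩
      · rw [map_sub, map_smul, hcφ, ← hd, pow_succ]
        module
      · change _ = resLift R r M (φ - glue R r M (0, _))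
        rw [resLift_koszulTotalDiff, resLift_glue, map_sub, resLift_glue, sub_zero, hcφ]
      · change _ = resInsert R r M (φ - glue R r M (0, _))
        rw [resInsert_koszulTotalDiff x hc', resLift_glue, resInsert_glue, map_sub,
          resInsert_glue, map_zero, zero_add, LinearMap.id_apply, sub_sub_cancel]

end Split

section Top

variable {r : ℕ} {M : Type u} [AddCommGroup M] [Module R M]

theorem mem_span_range_smul_top_iff (x : Fin r → R) (m : M) :
    m ∈ Ideal.span (Set.range x) • (⊤ : Submodule R M) ↔
      ∃ c : Fin r → M, ∑ j, x j • c j = m := by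
  constructor
  · intro h
    induction h using Submodule.smul_induction_on' with
    | smul a ha m _ =>
      obtain ⟨c, rfl⟩ := Ideal.mem_span_range_iff_exists_fun.1 ha
      refine ⟨fun j => c j • m, ?_⟩
      rw [Finset.sum_smul]
      refine Finset.sum_congr rfl fun j _ => ?_
      rw [smul_smul, mul_comm]
    | add m _ m' _ h h' =>
      obtain ⟨c, rfl⟩ := h
      obtain ⟨c', rfl⟩ := h'
      exact ⟨c + c', by simp [Finset.sum_add_distrib]⟩
  · rintro ⟨c, rfl⟩
    exact Submodule.sum_mem _ fun j _ =>
      Submodule.smul_mem_smul (Ideal.subset_span ⟨j, rfl⟩) Submodule.mem_top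

theorem koszulTotalDiff_univ_mem (x : Fin r → R) (φ : Finset (Fin r) → M) :
    koszulTotalDiff M x φ Finset.univ ∈ Ideal.span (Set.range x) • (⊤ : Submodule R M) := by
  rw [koszulTotalDiff_apply, mem_span_range_smul_top_iff]
  exact ⟨_, Finset.sum_congr rfl fun j _ => by rw [smul_smul, mul_comm]⟩

theorem eq_of_apply_univ_eq {φ ψ : Finset (Fin r) → M}
    (hφ : φ ∈ supportedOnCard R r M (· = r)) (hψ : ψ ∈ supportedOnCard R r M (· = r))
    (h : φ Finset.univ = ψ Finset.univ) : φ = ψ := by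
  funext s
  by_cases hs : s.card = r
  · rwa [(Finset.card_eq_iff_eq_univ s).1 (by rw [hs, Fintype.card_fin])]
  · rw [hφ s hs, hψ s hs]

theorem exists_koszulTotalDiff_univ_eq (x : Fin r → R) {m : M}
    (hm : m ∈ Ideal.span (Set.range x) • (⊤ : Submodule R M)) :
    ∃ φ ∈ supportedOnCard R r M (· + 1 = r), koszulTotalDiff M x φ Finset.univ = m := by
  obtain ⟨c, rfl⟩ := (mem_span_range_smul_top_iff x m).1 hm
  let ε : Fin r → R := fun j => (-1) ^ ((Finset.univ : Finset (Fin r)).filter (· < j)).card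
  have hε : ∀ j, ε j * ε j = 1 := fun j => by
    rw [← mul_pow, neg_one_mul, neg_neg, one_pow]
  refine ⟨fun s => if s.card + 1 = r then ∑ j ∈ sᶜ, ε j • c j else 0,
    fun s hs => if_neg hs, ?_⟩
  rw [koszulTotalDiff_apply]
  refine Finset.sum_congr rfl fun j _ => ?_
  rw [if_pos (by rw [Finset.card_erase_add_one (Finset.mem_univ j), Finset.card_fin]),
    Finset.compl_erase, Finset.compl_univ, insert_empty_eq, Finset.sum_singleton, smul_smul]
  change (ε j * x j * ε j) • c j = _
  rw [mul_right_comm, hε, one_mul]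

theorem mem_koszulCoboundaries_top_iff (x : Fin r → R) {φ : Finset (Fin r) → M}
    (hφ : φ ∈ supportedOnCard R r M (· = r)) :
    φ ∈ koszulCoboundaries M x r ↔
      φ Finset.univ ∈ Ideal.span (Set.range x) • (⊤ : Submodule R M) := by
  constructor
  · rintro ⟨c, -, rfl⟩
    exact koszulTotalDiff_univ_mem x c
  · intro h
    obtain ⟨c, hc, h⟩ := exists_koszulTotalDiff_univ_eq x h
    exact ⟨c, hc, eq_of_apply_univ_eq (koszulTotalDiff_mem_supportedOnCard x hc) hφ h⟩

theorem supportedOnCard_le_ker_koszulTotalDiff (x : Fin r → R) :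
    supportedOnCard R r M (· = r) ≤ LinearMap.ker (koszulTotalDiff M x) := by
  intro φ hφ
  rw [LinearMap.mem_ker]
  funext t
  refine koszulTotalDiff_mem_supportedOnCard (i := r + 1) x ?_ t fun h => ?_
  · rwa [supportedOnCard_succ]
  · have := Finset.card_le_univ t
    rw [Fintype.card_fin] at this
    omega

variable {T : Set (ModuleCat.{u} R)}

/-- If `H^j(x₁, …, x_r; M)` lies in `T` for `j < r`, then `H^r(x₁, …, x_{r+1}; M)` lies in `T` if
and only if `((x₁, …, x_r)M : x_{r+1}) / (x₁, …, x_r)M` does. -/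
theorem subquotientMem_koszul_last_iff (hT : IsTorsionTheory R T) (x : Fin (r + 1) → R)
    (h : ∀ j < r, SubquotientMem T (koszulCocycles M (fun j => x j.castSucc) j)
      (koszulCoboundaries M (fun j => x j.castSucc) j)) :
    SubquotientMem T (koszulCocycles M x r) (koszulCoboundaries M x r) ↔
      SubquotientMem T
        ((Ideal.span (Set.range fun j : Fin r => x j.castSucc) • (⊤ : Submodule R M)).comap
          (LinearMap.lsmul R M (x (Fin.last r))))
        (Ideal.span (Set.range fun j : Fin r => x j.castSucc) • (⊤ : Submodule R M)) := by
  set x' : Fin r → R := fun j => x j.castSucc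
  let ev : (Finset (Fin (r + 1)) → M) →ₗ[R] M :=
    LinearMap.proj Finset.univ ∘ₗ resLift R r M
  have hev : ∀ φ, ev φ = resLift R r M φ Finset.univ := fun _ => rfl
  have hsign : ((-1 : R) ^ r * (-1 : R) ^ r) = 1 := by
    rw [← mul_pow, neg_one_mul, neg_neg, one_pow]
  have hA : ∀ φ ∈ koszulCocycles M x r, ev φ ∈
      (Ideal.span (Set.range x') • (⊤ : Submodule R M)).comap
        (LinearMap.lsmul R M (x (Fin.last r))) := by
    intro φ hφ
    obtain ⟨-, -, hd⟩ := (mem_koszulCocycles_iff_res x).1 hφ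
    have hd := congrFun hd Finset.univ
    have hx : x (Fin.last r) • resLift R r M φ Finset.univ =
        (-(-1 : R) ^ r) • koszulTotalDiff M x' (resInsert R r M φ) Finset.univ := by
      rw [Pi.add_apply, Pi.smul_apply, Pi.zero_apply, add_eq_zero_iff_eq_neg] at hd
      rw [hd, smul_neg, neg_smul, neg_neg, smul_smul, ← mul_assoc, hsign, one_mul]
    rw [Submodule.mem_comap, LinearMap.lsmul_apply, hev, hx]
    exact Submodule.smul_mem _ _ (koszulTotalDiff_univ_mem x' _)
  have hB : ∀ φ ∈ koszulCocycles M x r, φ ∈ koszulCoboundaries M x r →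
      ev φ ∈ Ideal.span (Set.range x') • (⊤ : Submodule R M) := fun φ hφ hφ' =>
    (mem_koszulCoboundaries_top_iff x' ((mem_koszulCocycles_iff_res x).1 hφ).1.1).1
      (resLift_mem_koszulCoboundaries x hφ')
  constructor
  · refine SubquotientMem.of_surjective hT ev hA hB fun m hm => ?_
    obtain ⟨b, hb, hbm⟩ := exists_koszulTotalDiff_univ_eq x'
      (Submodule.smul_mem _ (-(-1 : R) ^ r) hm)
    let a : Finset (Fin r) → M := fun s => if s.card = r then m else 0
    have ha : a ∈ supportedOnCard R r M (· = r) := fun s hs => if_neg hs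
    have ham : a Finset.univ = m := if_pos (by simp)
    refine ⟨glue R r M (a, b), ?_, ?_⟩
    · rw [mem_koszulCocycles_iff_res, resLift_glue, resInsert_glue]
      refine ⟨⟨ha, supportedOnCard_le_ker_koszulTotalDiff x' ha⟩, hb, eq_of_apply_univ_eq
        (add_mem (koszulTotalDiff_mem_supportedOnCard x' hb) (Submodule.smul_mem _ _ ha))
        (zero_mem _) ?_⟩
      rw [Pi.add_apply, hbm, Pi.smul_apply, ham, LinearMap.lsmul_apply, Pi.zero_apply]
      module
    · rw [hev, resLift_glue, ham, sub_self]
      exact zero_mem _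
  · intro hQ
    refine SubquotientMem.of_ker hT ev hA hB ?_ hQ
    have hker := subquotientMem_ker_resLift x hT hQ.nonempty r fun k hk => h k (by omega)
    convert hker using 1
    ext φ
    refine and_congr_right fun hφ => ?_
    exact (mem_koszulCoboundaries_top_iff x' ((mem_koszulCocycles_iff_res x).1 hφ).1.1).symm

/-- If `H^j(x₁, …, x_r; M)` lies in `T` for `j < r`, then `H^j(x₁, …, x_{r+1}; M)` lies in `T` for
all `j < r + 1` if and only if `((x₁, …, x_r)M : x_{r+1}) / (x₁, …, x_r)M` does. -/
theorem forall_koszulCohomology_mem_succ_iff (hT : IsTorsionTheory R T) (x : Fin (r + 1) → R)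
    (h : ∀ j < r, ModuleCat.of R (koszulCohomology (fun j : Fin r => x j.castSucc) M j) ∈ T) :
    (∀ j < r + 1, ModuleCat.of R (koszulCohomology x M j) ∈ T) ↔
      SubquotientMem T
        ((Ideal.span (Set.range fun j : Fin r => x j.castSucc) • (⊤ : Submodule R M)).comap
          (LinearMap.lsmul R M (x (Fin.last r))))
        (Ideal.span (Set.range fun j : Fin r => x j.castSucc) • (⊤ : Submodule R M)) := by
  simp only [koszulCohomology_mem_iff hT] at h ⊢
  rw [← subquotientMem_koszul_last_iff hT x h]
  refine ⟨fun hx => hx r (Nat.lt_succ_self r), fun hr j hj => ?_⟩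
  obtain rfl | hj := Nat.eq_or_lt_of_le (Nat.lt_succ_iff.1 hj)
  · exact hr
  · exact SubquotientMem.of_ker hT (resLift R r M)
      (fun φ hφ => ((mem_koszulCocycles_iff_res x).1 hφ).1)
      (fun φ _ => resLift_mem_koszulCoboundaries x)
      (subquotientMem_ker_resLift x hT hr.nonempty j fun k hk => h k (by omega)) (h j hj)

theorem le_TKgrade_iff (x : Fin r → R) (i : ℕ) :
    (i : ℕ∞) ≤ TKgrade T x M ↔
      ∀ j < i, ModuleCat.of R (koszulCohomology x M j) ∈ T := by
  rw [TKgrade, le_sInf_iff, Set.forall_mem_image]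
  simp only [Set.mem_ofPred_eq, Nat.cast_le]
  refine forall_congr' fun j => ?_
  rw [not_imp_comm, not_le]

end Top

/-- **Theorem.** Let `𝔗` be a torsion theory, `x₁, …, x_n` a finite sequence of elements of
`R` and `M` an `R`-module. Then `x₁, …, x_n` is a weak `M`-regular sequence with respect to
`𝔗` if and only if `𝔗-Kgrade_R((x₁, …, x_i)R, M) ≥ i` for all `i = 1, …, n`. -/
theorem isWeakRegularSeqWrt_iff_le_tKgrade (T : Set (ModuleCat.{u} R))
    (hT : IsTorsionTheory R T) (M : Type u) [AddCommGroup M] [Module R M]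
    {n : ℕ} (x : Fin n → R) :
    IsWeakRegularSeqWrt T x M ↔
      ∀ (i : ℕ) (h : i ≤ n),
        (i : ℕ∞) ≤ TKgrade T (fun j : Fin i => x (Fin.castLE h j)) M := by
  have key : ∀ i (hi : i ≤ n),
      (∀ k : Fin n, (k : ℕ) < i → ModuleCat.of R
        ↥(Submodule.map (Ideal.span (x '' {j | j < k}) • (⊤ : Submodule R M)).mkQ
          (Submodule.comap (LinearMap.lsmul R M (x k))
            (Ideal.span (x '' {j | j < k}) • (⊤ : Submodule R M)))) ∈ T) ↔
      ∀ (l : ℕ) (hl : l ≤ i),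
        (l : ℕ∞) ≤ TKgrade T (fun j : Fin l => x (Fin.castLE (hl.trans hi) j)) M := by
    intro i
    induction i with
    | zero =>
      refine fun hi => ⟨fun _ l hl => ?_, fun _ k hk => absurd hk (Nat.not_lt_zero _)⟩
      obtain rfl := Nat.le_zero.1 hl
      simp
    | succ i ih =>
      intro hi
      have hset : Set.range (fun j : Fin i => x (Fin.castLE hi j.castSucc)) =
          x '' {j | j < (⟨i, hi⟩ : Fin n)} := by
        ext y
        constructor
        · rintro ⟨j, rfl⟩
          exact ⟨_, j.2, rfl⟩
        · rintro ⟨j, hj, rfl⟩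
          exact ⟨⟨j, hj⟩, rfl⟩
      have step := forall_koszulCohomology_mem_succ_iff (M := M) hT
        (fun j : Fin (i + 1) => x (Fin.castLE hi j))
      rw [hset, SubquotientMem.iff_map_mkQ hT, ← le_TKgrade_iff, ← le_TKgrade_iff] at step
      have ih := ih (Nat.le_of_succ_le hi)
      constructor
      · intro h l hl
        have hprev := ih.1 fun k hk => h k (hk.trans (Nat.lt_succ_self i))
        obtain rfl | hl := Nat.eq_or_lt_of_le hl
        · exact (step (hprev i le_rfl)).2 (h ⟨i, hi⟩ (Nat.lt_succ_self i))
        · exact hprev l (Nat.lt_succ_iff.1 hl)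
      · intro h k hk
        obtain hk' | hk' := Nat.lt_or_eq_of_le (Nat.lt_succ_iff.1 hk)
        · exact ih.2 (fun l hl => h l (hl.trans (Nat.le_succ i))) k hk'
        · obtain rfl : k = ⟨i, hi⟩ := Fin.ext hk'
          exact (step (h i (Nat.le_succ i))).1 (h (i + 1) le_rfl)
  rw [← key n le_rfl]
  exact ⟨fun h k _ => h k, fun h k => h k k.2⟩
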